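/- Let L = ℚ(ω, θ) where ω = e^{2πi/3} and θ = ζ₂₈ + ζ₂₈⁻¹ = 2cos(π/14), a degree-12 number field with ring of integers O_L = ℤ[ω][θ]. There exist exactly two distinct prime ideals I and J of O_L lying above the rational prime 7; each has ramification index 6 and residue degree 1 (so absolute norm 7), the factorization 7·O_L = I⁶ · J⁶ holds, and I (equivalently J) is not a principal ideal. -/

import Mathlib

noncomputable section

open Complex

/-- `ω = e^{2πi/3}`, the primitive cube root of unity. -/
def om : ℂ := Complex.exp (2 * Real.pi * Complex.I / 3)

/-- `θ = ζ₂₈ + ζ₂₈⁻¹ = 2cos(π/14)`. -/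
def t28 : ℂ := 2 * Real.cos (Real.pi / 14)

/-- The ring of integers `O_L = ℤ[ω][θ]` of the degree-12 number field
`L = ℚ(ω, θ)`, realized as the subring of `ℂ` generated by `ω` and `θ`. -/
def OL28 : Subring ℂ := Subring.closure {om, t28}

/-! Since `θ⁶ - 7θ⁴ + 14θ² - 7 = 0`, the number `7` is a unit times `θ⁶`. As `7 = (3 + ω)(3 + ω̄)`
with coprime factors, `(θ) = P · P̄` for `P = (3 + ω, θ)`, and both factors have residue field `𝔽₇`.

If `P = (α)`, then `αᾱ = uθ` for a unit `u`. Both `αᾱ` and `θ` are fixed by conjugation, so `u` is a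
unit of `ℤ[θ]`, and every real embedding makes `αᾱ = a² - ab + b²` nonnegative; hence the norm of
`uθ` from `ℤ[θ]` to `ℤ` is nonnegative. But `θ` has norm `-7`, and `u` has norm `1`: modulo `7` the
ring `ℤ[θ]` becomes `𝔽₇[X] / (X⁶)`, so norms are sixth powers mod `7`, and `-1` is not a square. -/

open Polynomial

section ReductionModPrime

variable {F g : ℤ[X]}

lemma irreducible_of_map_zmod_eq_X_pow {p : ℕ} [Fact p.Prime] (hF : F.Monic)
    (hFp : F.map (Int.castRingHom (ZMod p)) = X ^ F.natDegree) (hdeg : 0 < F.natDegree)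
    (hF0 : ¬ (p : ℤ) ^ 2 ∣ F.coeff 0) : Irreducible F := by
  have hp : Prime (p : ℤ) := Nat.prime_iff_prime_int.1 Fact.out
  have heisenstein : F.IsEisensteinAt (Ideal.span {(p : ℤ)}) := by
    refine ⟨?_, fun {n} hn ↦ ?_, ?_⟩
    · rw [hF.leadingCoeff, Ideal.mem_span_singleton]
      exact hp.not_dvd_one
    · have hcoeff := congrArg (coeff · n) hFp
      simp only [coeff_map, coeff_X_pow, hn.ne, if_false, eq_intCast] at hcoeff
      exact Ideal.mem_span_singleton.2 ((ZMod.intCast_zmod_eq_zero_iff_dvd _ p).1 hcoeff)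
    · rwa [Ideal.span_singleton_pow, Ideal.mem_span_singleton]
  exact heisenstein.irreducible ((Ideal.span_singleton_prime hp.ne_zero).2 hp) hF.isPrimitive hdeg

lemma resultant_nonneg_of_splits_real (hF : F.Monic)
    (hsplit : (F.map (Int.castRingHom ℝ)).Splits)
    (hg : ∀ r : ℝ, aeval r F = 0 → 0 ≤ aeval r g) : 0 ≤ resultant F g := by
  have hprod := resultant_eq_prod_eval _ (g.map (Int.castRingHom ℝ)) g.natDegree
    natDegree_map_le hsplit
  rw [hF.natDegree_map, resultant_map_map, (hF.map _).leadingCoeff, one_pow, one_mul] at hprod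
  have hreal : (0 : ℝ) ≤ (resultant F g : ℤ) := by
    rw [← eq_intCast (Int.castRingHom ℝ), hprod]
    refine Multiset.prod_nonneg fun x hx ↦ ?_
    obtain ⟨r, hr, rfl⟩ := Multiset.mem_map.1 hx
    rw [eval_map]
    have hroot : eval₂ (Int.castRingHom ℝ) r F = 0 :=
      (eval_map _ _).symm.trans (isRoot_of_mem_roots hr)
    exact hg r hroot
  exact_mod_cast hreal

lemma intCast_resultant_eq_coeff_zero_pow {p : ℕ}
    (hFp : F.map (Int.castRingHom (ZMod p)) = X ^ F.natDegree) :
    ((resultant F g : ℤ) : ZMod p) = (g.coeff 0 : ZMod p) ^ F.natDegree := by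
  rw [← eq_intCast (Int.castRingHom (ZMod p)), ← resultant_map_map, hFp,
    resultant_X_pow_left _ _ _ natDegree_map_le, coeff_map, eq_intCast]

lemma resultant_eq_one_of_isCoprime {p : ℕ} [Fact p.Prime] (hp : p % 4 = 3) (hF : F.Monic)
    (hFp : F.map (Int.castRingHom (ZMod p)) = X ^ F.natDegree) (heven : Even F.natDegree)
    (hg : IsCoprime F g) : resultant F g = 1 := by
  refine (Int.isUnit_iff.1 ((isUnit_resultant_iff_isCoprime hF).2 hg)).resolve_right fun h ↦ ?_
  have hsq : IsSquare (-1 : ZMod p) := by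
    have hpow := intCast_resultant_eq_coeff_zero_pow (g := g) hFp
    rw [h, Int.cast_neg, Int.cast_one] at hpow
    exact hpow ▸ heven.isSquare_pow _
  exact ZMod.exists_sq_eq_neg_one_iff.1 hsq hp

/-- In terms of `ℤ[θ] = ℤ[X] / (F)`: no product of `θ` with a unit is totally nonnegative, because
`θ` has norm `F(0) < 0` and units have norm `1`, norms being squares modulo `p ≡ 3 mod 4`. -/
theorem exists_root_mul_aeval_neg {p : ℕ} [Fact p.Prime] (hp : p % 4 = 3) (hF : F.Monic)
    (hsplit : (F.map (Int.castRingHom ℝ)).Splits)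
    (hFp : F.map (Int.castRingHom (ZMod p)) = X ^ F.natDegree) (heven : Even F.natDegree)
    (hF0 : F.coeff 0 < 0) (hg : IsCoprime F g) :
    ∃ r : ℝ, aeval r F = 0 ∧ r * aeval r g < 0 := by
  by_contra! hnonneg
  have hXg : 0 ≤ resultant F (X * g) :=
    resultant_nonneg_of_splits_real hF hsplit (by simpa using hnonneg)
  have hg0 : g ≠ 0 := by
    rintro rfl
    obtain rfl := hF.isUnit_iff.1 (isCoprime_zero_right.1 hg)
    simp at hF0
  have hmul : resultant F (X * g) = F.coeff 0 := by
    have hX := resultant_X_pow_right F F.natDegree 1 le_rfl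
    rw [pow_one, pow_one, mul_one, heven.neg_one_pow, one_mul] at hX
    have := resultant_mul_right F X g F.natDegree le_rfl
    rwa [← natDegree_mul X_ne_zero hg0, natDegree_X, hX,
      resultant_eq_one_of_isCoprime hp hF hFp heven hg, mul_one] at this
  exact absurd hF0 (hmul ▸ hXg).not_gt

end ReductionModPrime

/-- The minimal polynomial of `θ = 2cos(π/14)`, the nontrivial factor of the (rescaled) seventh
Chebyshev polynomial. -/
def thetaPoly : ℤ[X] := X ^ 6 - 7 * X ^ 4 + 14 * X ^ 2 - 7

lemma natDegree_thetaPoly : thetaPoly.natDegree = 6 := by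
  unfold thetaPoly
  compute_degree!

lemma monic_thetaPoly : thetaPoly.Monic := by
  unfold thetaPoly
  monicity!

lemma coeff_zero_thetaPoly : thetaPoly.coeff 0 = -7 := by
  simp [thetaPoly, coeff_zero_eq_eval_zero]

lemma aeval_thetaPoly {A : Type*} [CommRing A] (t : A) :
    aeval t thetaPoly = t ^ 6 - 7 * t ^ 4 + 14 * t ^ 2 - 7 := by
  simp only [thetaPoly, map_sub, map_add, map_mul, map_pow, aeval_X, map_ofNat]

lemma map_thetaPoly_zmod_seven :
    thetaPoly.map (Int.castRingHom (ZMod 7)) = X ^ thetaPoly.natDegree := by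
  have h7 : (7 : (ZMod 7)[X]) = 0 := CharP.cast_eq_zero _ 7
  rw [natDegree_thetaPoly]
  simp only [thetaPoly, Polynomial.map_sub, Polynomial.map_add, Polynomial.map_mul,
    Polynomial.map_pow, map_X, Polynomial.map_ofNat]
  linear_combination (-X ^ 4 + 2 * X ^ 2 - 1) * h7

lemma chebyshev_C_seven (R : Type*) [CommRing R] :
    Chebyshev.C R 7 = X * thetaPoly.map (Int.castRingHom R) := by
  have h3 := Chebyshev.C_add_two R 1
  have h4 := Chebyshev.C_add_two R 2
  have h5 := Chebyshev.C_add_two R 3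
  have h6 := Chebyshev.C_add_two R 4
  have h7 := Chebyshev.C_add_two R 5
  norm_num [Chebyshev.C_two] at h3 h4 h5 h6 h7
  rw [h7, h6, h5, h4, h3]
  simp only [thetaPoly, Polynomial.map_sub, Polynomial.map_add, Polynomial.map_mul,
    Polynomial.map_pow, map_X, Polynomial.map_ofNat]
  ring

lemma splits_chebyshev_C_real (n : ℕ) : (Chebyshev.C ℝ n).Splits := by
  have hT : (Chebyshev.T ℝ n).Splits := by
    rw [splits_iff_card_roots, Chebyshev.roots_T_real, Finset.card_val,
      Finset.card_image_of_injOn, Finset.card_range, Chebyshev.natDegree_T, Int.natAbs_natCast]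
    exact (Finset.range n).nodup_map_iff_injOn.1 (Chebyshev.roots_T_real_nodup n)
  rw [Chebyshev.C_eq_two_mul_T_comp_half_mul_X, ← map_ofNat Polynomial.C 2]
  refine (Splits.C 2).mul (hT.comp_of_natDegree_le_one_of_invertible ?_ ?_)
  · exact (natDegree_C_mul_le _ _).trans natDegree_X_le
  · rw [leadingCoeff_C_mul_X]
    infer_instance

lemma splits_map_thetaPoly_real : (thetaPoly.map (Int.castRingHom ℝ)).Splits := by
  have hC := splits_chebyshev_C_real 7
  rw [Nat.cast_ofNat, chebyshev_C_seven] at hC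
  exact hC.of_dvd (mul_ne_zero X_ne_zero (monic_thetaPoly.map _).ne_zero) (dvd_mul_left _ _)

lemma irreducible_thetaPoly : Irreducible thetaPoly := by
  have : Fact (Nat.Prime 7) := ⟨by norm_num⟩
  refine irreducible_of_map_zmod_eq_X_pow monic_thetaPoly map_thetaPoly_zmod_seven ?_ ?_
  · rw [natDegree_thetaPoly]
    norm_num
  · rw [coeff_zero_thetaPoly]
    norm_num

lemma thetaPoly_dvd_of_aeval_eq_zero {A : Type*} [CommRing A] [CharZero A] [IsDomain A] {t : A}
    (ht : aeval t thetaPoly = 0) {p : ℤ[X]} (hp : aeval t p = 0) : thetaPoly ∣ p := by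
  have hint : IsIntegral ℤ t := ⟨thetaPoly, monic_thetaPoly, ht⟩
  have hassoc : Associated (minpoly ℤ t) thetaPoly :=
    (minpoly.irreducible hint).associated_of_dvd irreducible_thetaPoly
      (minpoly.isIntegrallyClosed_dvd hint ht)
  exact hassoc.dvd'.trans (minpoly.isIntegrallyClosed_dvd hint hp)

section Ring

variable {A B : Type*} [CommRing A] [CommRing B]

lemma intCast_surjective_of_closure_eq_top {s : Set A} (hs : Subring.closure s = ⊤)
    {f : A →+* B} (hf : Function.Surjective f)
    (hrange : ∀ a ∈ s, f a ∈ (Int.castRingHom B).range) :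
    Function.Surjective (Int.castRingHom B) := by
  have hle : Subring.closure s ≤ (Int.castRingHom B).range.comap f := Subring.closure_le.2 hrange
  intro b
  obtain ⟨a, rfl⟩ := hf b
  exact hle (hs ▸ Subring.mem_top a)

lemma isIntegral_of_closure_eq_top {s : Set A} (hs : Subring.closure s = ⊤)
    (hint : ∀ a ∈ s, IsIntegral ℤ a) : Algebra.IsIntegral ℤ A := by
  have hle : Subring.closure s ≤ (integralClosure ℤ A).toSubring := Subring.closure_le.2 hint
  exact ⟨fun x ↦ hle (hs ▸ Subring.mem_top x)⟩

lemma nonempty_zmod_ringEquiv_of_intCast_surjective [Nontrivial B] {p : ℕ} [Fact p.Prime]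
    (hp : (p : B) = 0) (hsurj : Function.Surjective (Int.castRingHom B)) :
    Nonempty (ZMod p ≃+* B) := by
  have : CharP B p := (CharP.charP_iff_prime_eq_zero Fact.out).2 hp
  refine ⟨RingEquiv.ofBijective (ZMod.castHom dvd_rfl B)
    ⟨ZMod.castHom_injective B, fun b ↦ ?_⟩⟩
  obtain ⟨n, rfl⟩ := hsurj b
  exact ⟨n, map_intCast _ n⟩

lemma span_pair_mul_span_pair_of_isCoprime {a b t : A} (hab : IsCoprime a b) (ht : t ∣ a * b) :
    Ideal.span {a, t} * Ideal.span {b, t} = Ideal.span {t} := by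
  rw [Ideal.span_pair_mul_span_pair]
  apply le_antisymm
  · rw [Ideal.span_le]
    rintro x (rfl | rfl | rfl | rfl)
    all_goals rw [SetLike.mem_coe, Ideal.mem_span_singleton]
    exacts [ht, dvd_mul_left _ _, dvd_mul_right _ _, dvd_mul_right _ _]
  · obtain ⟨x, y, hxy⟩ := hab
    have hcomb : t = x * (a * t) + y * (t * b) := by linear_combination -t * hxy
    have hleft : a * t ∈ Ideal.span {a * b, a * t, t * b, t * t} := Ideal.subset_span (by simp)
    have hright : t * b ∈ Ideal.span {a * b, a * t, t * b, t * t} := Ideal.subset_span (by simp)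
    rw [Ideal.span_singleton_le_iff_mem]
    have := add_mem (Ideal.mul_mem_left _ x hleft) (Ideal.mul_mem_left _ y hright)
    rwa [← hcomb] at this

end Ring

section PrimeAboveSeven

variable {A : Type*} [CommRing A] {w t : A}

/-- The ideal `(3 + w, t)`, where `w` is a root of `X² + X + 1` and `t` a root of `thetaPoly`. The
other root `-1 - w` gives the second ideal above `7`, since `7 = (3 + w)(3 + (-1 - w))`. -/
def primeAboveSeven (w t : A) : Ideal A := Ideal.span {3 + w, t}

lemma three_add_mem_primeAboveSeven : 3 + w ∈ primeAboveSeven w t :=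
  Ideal.subset_span (by simp)

lemma right_mem_primeAboveSeven : t ∈ primeAboveSeven w t :=
  Ideal.subset_span (by simp)

lemma primeAboveSeven_le_iff {I : Ideal A} : primeAboveSeven w t ≤ I ↔ 3 + w ∈ I ∧ t ∈ I := by
  rw [primeAboveSeven, Ideal.span_le, Set.insert_subset_iff, Set.singleton_subset_iff,
    SetLike.mem_coe, SetLike.mem_coe]

lemma three_add_mul_conj (hw : w ^ 2 + w + 1 = 0) : (3 + w) * (3 + (-1 - w)) = 7 := by
  linear_combination -hw

lemma isCoprime_three_add_conj (hw : w ^ 2 + w + 1 = 0) : IsCoprime (3 + w) (3 + (-1 - w)) :=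
  ⟨3, -3 - 2 * w, by linear_combination 2 * hw⟩

lemma associated_seven_pow_six (ht : aeval t thetaPoly = 0) : Associated 7 (t ^ 6) := by
  rw [aeval_thetaPoly] at ht
  have hunit : IsUnit (t ^ 2 - 1) :=
    .of_mul_eq_one (-(t ^ 4 - 6 * t ^ 2 + 8)) (by linear_combination -ht)
  exact ⟨(hunit.pow 2).unit, by rw [IsUnit.unit_spec]; linear_combination -ht⟩

lemma seven_mem_primeAboveSeven (ht : aeval t thetaPoly = 0) : 7 ∈ primeAboveSeven w t :=
  Ideal.mem_of_dvd _ (associated_seven_pow_six ht).dvd'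
    (Ideal.pow_mem_of_mem _ right_mem_primeAboveSeven 6 (by norm_num))

lemma primeAboveSeven_mul_conj (hw : w ^ 2 + w + 1 = 0) (ht : aeval t thetaPoly = 0) :
    primeAboveSeven w t * primeAboveSeven (-1 - w) t = Ideal.span {t} := by
  refine span_pair_mul_span_pair_of_isCoprime (isCoprime_three_add_conj hw) ?_
  rw [three_add_mul_conj hw]
  exact (dvd_pow_self t (by norm_num)).trans (associated_seven_pow_six ht).dvd'

lemma span_seven_eq_pow_mul_pow (hw : w ^ 2 + w + 1 = 0) (ht : aeval t thetaPoly = 0) :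
    Ideal.span {7} = primeAboveSeven w t ^ 6 * primeAboveSeven (-1 - w) t ^ 6 := by
  have h7 := associated_seven_pow_six ht
  rw [← mul_pow, primeAboveSeven_mul_conj hw ht, Ideal.span_singleton_pow]
  exact le_antisymm (Ideal.span_singleton_le_span_singleton.2 h7.dvd')
    (Ideal.span_singleton_le_span_singleton.2 h7.dvd)

lemma primeAboveSeven_ne_conj (hw : w ^ 2 + w + 1 = 0) (htop : primeAboveSeven w t ≠ ⊤) :
    primeAboveSeven w t ≠ primeAboveSeven (-1 - w) t := by
  intro heq
  obtain ⟨x, y, hxy⟩ := isCoprime_three_add_conj hw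
  refine htop ((Ideal.eq_top_iff_one _).2 (hxy ▸ add_mem ?_ ?_))
  · exact Ideal.mul_mem_left _ _ three_add_mem_primeAboveSeven
  · exact heq ▸ Ideal.mul_mem_left _ _ three_add_mem_primeAboveSeven

lemma primeAboveSeven_le_or_conj_le (hw : w ^ 2 + w + 1 = 0) (ht : aeval t thetaPoly = 0)
    {R : Ideal A} (hR : R.IsPrime) (h7 : 7 ∈ R) :
    primeAboveSeven w t ≤ R ∨ primeAboveSeven (-1 - w) t ≤ R := by
  have htR : t ∈ R := hR.mem_of_pow_mem 6 (R.mem_of_dvd (associated_seven_pow_six ht).dvd h7)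
  rw [← three_add_mul_conj hw] at h7
  exact (hR.mem_or_mem h7).imp (primeAboveSeven_le_iff.2 ⟨·, htR⟩)
    (primeAboveSeven_le_iff.2 ⟨·, htR⟩)

lemma nonempty_zmod_seven_ringEquiv_quotient (ht : aeval t thetaPoly = 0)
    (hgen : Subring.closure {w, t} = ⊤) (htop : primeAboveSeven w t ≠ ⊤) :
    Nonempty (ZMod 7 ≃+* A ⧸ primeAboveSeven w t) := by
  have : Fact (Nat.Prime 7) := ⟨by norm_num⟩
  have : Nontrivial (A ⧸ primeAboveSeven w t) := Ideal.Quotient.nontrivial_iff.2 htop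
  refine nonempty_zmod_ringEquiv_of_intCast_surjective ?_
    (intCast_surjective_of_closure_eq_top hgen Ideal.Quotient.mk_surjective ?_)
  · exact_mod_cast Ideal.Quotient.eq_zero_iff_mem.2 (seven_mem_primeAboveSeven (w := w) ht)
  · rintro a (rfl | rfl)
    · have hw := Ideal.Quotient.eq_zero_iff_mem.2 (three_add_mem_primeAboveSeven (w := a) (t := t))
      rw [map_add, map_ofNat] at hw
      exact ⟨-3, by rw [map_neg, map_ofNat]; linear_combination -hw⟩
    · exact ⟨0, by
        rw [map_zero, Ideal.Quotient.eq_zero_iff_mem.2 (right_mem_primeAboveSeven (w := w))]⟩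

lemma exists_eq_aeval_add_mul_aeval (hw : w ^ 2 + w + 1 = 0) {x : A}
    (hx : x ∈ Subring.closure {w, t}) : ∃ g h : ℤ[X], x = aeval t g + w * aeval t h := by
  induction hx using Subring.closure_induction with
  | mem x hx =>
    rcases hx with rfl | rfl
    · exact ⟨0, 1, by simp⟩
    · exact ⟨X, 0, by simp⟩
  | zero => exact ⟨0, 0, by simp⟩
  | one => exact ⟨1, 0, by simp⟩
  | add x y _ _ hx hy =>
    obtain ⟨g, h, rfl⟩ := hx
    obtain ⟨g', h', rfl⟩ := hy
    exact ⟨g + g', h + h', by simp only [map_add]; ring⟩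
  | neg x _ hx =>
    obtain ⟨g, h, rfl⟩ := hx
    exact ⟨-g, -h, by simp only [map_neg]; ring⟩
  | mul x y _ _ hx hy =>
    obtain ⟨g, h, rfl⟩ := hx
    obtain ⟨g', h', rfl⟩ := hy
    refine ⟨g * g' - h * h', g * h' + h * g' - h * h', ?_⟩
    simp only [map_add, map_sub, map_mul]
    linear_combination aeval t h * aeval t h' * hw

end PrimeAboveSeven

/-- `w` and `t` generate `A` and satisfy the equations of `ω` and `θ`, and the ring endomorphism
`σ` acts on them as complex conjugation does. The conjugate pair `-1 - w`, `t` has the same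
property, so each statement about it covers both primes above `7`. -/
structure IsOmegaThetaPair {A : Type*} [CommRing A] (σ : A →+* A) (w t : A) : Prop where
  sq_add_self_add_one : w ^ 2 + w + 1 = 0
  aeval_thetaPoly_eq_zero : aeval t thetaPoly = 0
  map_omega : σ w = -1 - w
  map_theta : σ t = t
  closure_eq_top : Subring.closure {w, t} = ⊤

namespace IsOmegaThetaPair

variable {A : Type*} [CommRing A] {σ : A →+* A} {w t : A}

lemma conj (h : IsOmegaThetaPair σ w t) : IsOmegaThetaPair σ (-1 - w) t where
  sq_add_self_add_one := by linear_combination h.sq_add_self_add_one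
  aeval_thetaPoly_eq_zero := h.aeval_thetaPoly_eq_zero
  map_omega := by rw [map_sub, map_neg, map_one, h.map_omega]
  map_theta := h.map_theta
  closure_eq_top := by
    rw [← top_le_iff, ← h.closure_eq_top, Subring.closure_le]
    have hconj : -1 - w ∈ Subring.closure {-1 - w, t} := Subring.subset_closure (by simp)
    rintro x (rfl | rfl)
    · simpa using sub_mem (neg_mem (one_mem _)) hconj
    · exact Subring.subset_closure (by simp)

lemma map_primeAboveSeven (h : IsOmegaThetaPair σ w t) :
    (primeAboveSeven w t).map σ = primeAboveSeven (-1 - w) t := by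
  rw [primeAboveSeven, primeAboveSeven, Ideal.map_span, Set.image_pair, map_add, map_ofNat,
    h.map_omega, h.map_theta]

lemma map_aeval (h : IsOmegaThetaPair σ w t) (g : ℤ[X]) : σ (aeval t g) = aeval t g := by
  rw [aeval_def, hom_eval₂, h.map_theta, RingHom.ext_int (σ.comp _) (algebraMap ℤ A)]

lemma exists_mul_map_eq_aeval (h : IsOmegaThetaPair σ w t) (x : A) :
    ∃ g k : ℤ[X], x * σ x = aeval t (g ^ 2 - g * k + k ^ 2) := by
  obtain ⟨g, k, rfl⟩ := exists_eq_aeval_add_mul_aeval h.sq_add_self_add_one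
    (h.closure_eq_top ▸ Subring.mem_top x)
  refine ⟨g, k, ?_⟩
  simp only [map_add, map_sub, map_mul, map_pow, h.map_aeval, h.map_omega]
  linear_combination -aeval t k ^ 2 * h.sq_add_self_add_one

variable [CharZero A] [IsDomain A]

lemma not_isUnit_theta (h : IsOmegaThetaPair σ w t) : ¬ IsUnit t := by
  intro ht
  have hintegral : Algebra.IsIntegral ℤ A := by
    refine isIntegral_of_closure_eq_top h.closure_eq_top ?_
    rintro x (rfl | rfl)
    · exact ⟨X ^ 2 + X + 1, by monicity!, by simpa using h.sq_add_self_add_one⟩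
    · exact ⟨thetaPoly, monic_thetaPoly, h.aeval_thetaPoly_eq_zero⟩
  have h7 : IsUnit (algebraMap ℤ A 7) := by
    rw [map_ofNat]
    exact (associated_seven_pow_six h.aeval_thetaPoly_eq_zero).isUnit_iff.2 (ht.pow 6)
  exact absurd (Int.isUnit_iff.1 (isUnit_of_map_unit (algebraMap ℤ A) 7 h7)) (by norm_num)

lemma primeAboveSeven_ne_top (h : IsOmegaThetaPair σ w t) : primeAboveSeven w t ≠ ⊤ := by
  intro htop
  have hmul := primeAboveSeven_mul_conj h.sq_add_self_add_one h.aeval_thetaPoly_eq_zero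
  rw [← h.map_primeAboveSeven, htop, Ideal.map_top, Ideal.top_mul, eq_comm,
    Ideal.span_singleton_eq_top] at hmul
  exact h.not_isUnit_theta hmul

lemma isMaximal_primeAboveSeven (h : IsOmegaThetaPair σ w t) :
    (primeAboveSeven w t).IsMaximal := by
  have : Fact (Nat.Prime 7) := ⟨by norm_num⟩
  obtain ⟨e⟩ := nonempty_zmod_seven_ringEquiv_quotient h.aeval_thetaPoly_eq_zero h.closure_eq_top
    h.primeAboveSeven_ne_top
  exact Ideal.Quotient.maximal_of_isField _ (e.symm.toMulEquiv.isField (Field.toIsField _))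

lemma card_quotient_primeAboveSeven (h : IsOmegaThetaPair σ w t) :
    Nat.card (A ⧸ primeAboveSeven w t) = 7 := by
  obtain ⟨e⟩ := nonempty_zmod_seven_ringEquiv_quotient h.aeval_thetaPoly_eq_zero h.closure_eq_top
    h.primeAboveSeven_ne_top
  rw [← Nat.card_congr e.toEquiv, Nat.card_zmod]

lemma eq_or_eq_conj_of_isPrime (h : IsOmegaThetaPair σ w t) {R : Ideal A} (hR : R.IsPrime)
    (h7 : 7 ∈ R) : R = primeAboveSeven w t ∨ R = primeAboveSeven (-1 - w) t :=
  (primeAboveSeven_le_or_conj_le h.sq_add_self_add_one h.aeval_thetaPoly_eq_zero hR h7).imp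
    (fun hle ↦ (h.isMaximal_primeAboveSeven.eq_of_le hR.ne_top hle).symm)
    (fun hle ↦ (h.conj.isMaximal_primeAboveSeven.eq_of_le hR.ne_top hle).symm)

lemma exists_eq_aeval_of_map_eq (h : IsOmegaThetaPair σ w t) {x : A} (hx : σ x = x) :
    ∃ g : ℤ[X], x = aeval t g := by
  obtain ⟨g, k, rfl⟩ := exists_eq_aeval_add_mul_aeval h.sq_add_self_add_one
    (h.closure_eq_top ▸ Subring.mem_top x)
  rw [map_add, map_mul, h.map_aeval, h.map_aeval, h.map_omega] at hx
  have hdisc : (2 * w + 1) ^ 2 = -3 := by linear_combination 4 * h.sq_add_self_add_one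
  have hne : 2 * w + 1 ≠ 0 := by
    intro h0
    rw [h0] at hdisc
    norm_num at hdisc
  have hmul : (2 * w + 1) * aeval t k = 0 := by linear_combination -hx
  exact ⟨g, by rw [(mul_eq_zero.1 hmul).resolve_left hne, mul_zero, add_zero]⟩

lemma exists_isCoprime_of_isUnit (h : IsOmegaThetaPair σ w t) {u : A} (hu : IsUnit u)
    (hσu : σ u = u) : ∃ e : ℤ[X], u = aeval t e ∧ IsCoprime thetaPoly e := by
  obtain ⟨v, huv⟩ := hu.exists_right_inv
  have hσv : σ v = v := hu.mul_left_cancel <| by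
    rw [huv, ← hσu, ← map_mul, huv, map_one]
  obtain ⟨e, rfl⟩ := h.exists_eq_aeval_of_map_eq hσu
  obtain ⟨n, rfl⟩ := h.exists_eq_aeval_of_map_eq hσv
  obtain ⟨q, hq⟩ := thetaPoly_dvd_of_aeval_eq_zero h.aeval_thetaPoly_eq_zero
    (p := e * n - 1) (by simp [huv])
  exact ⟨e, rfl, -q, n, by linear_combination hq⟩

theorem not_associated_theta_mul_map (h : IsOmegaThetaPair σ w t) (x : A) :
    ¬ Associated t (x * σ x) := by
  rintro ⟨u, hu⟩
  obtain ⟨g, k, hx⟩ := h.exists_mul_map_eq_aeval x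
  have ht : t ≠ 0 := by
    rintro rfl
    simpa [aeval_thetaPoly] using h.aeval_thetaPoly_eq_zero
  have hσu : σ u = u := mul_left_cancel₀ ht <| by
    rw [hu, hx, ← h.map_aeval (_ + _), ← hx, ← hu, map_mul, h.map_theta]
  obtain ⟨e, hue, he⟩ := h.exists_isCoprime_of_isUnit u.isUnit hσu
  have : Fact (Nat.Prime 7) := ⟨by norm_num⟩
  obtain ⟨r, hr, hneg⟩ := exists_root_mul_aeval_neg (p := 7) (by norm_num) monic_thetaPoly
    splits_map_thetaPoly_real map_thetaPoly_zmod_seven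
    (by rw [natDegree_thetaPoly]; decide) (by rw [coeff_zero_thetaPoly]; norm_num) he
  obtain ⟨q, hq⟩ := thetaPoly_dvd_of_aeval_eq_zero h.aeval_thetaPoly_eq_zero
    (p := X * e - (g ^ 2 - g * k + k ^ 2))
    (by rw [map_sub, map_mul, aeval_X, ← hue, ← hx, hu, sub_self])
  have hval := congrArg (aeval r) hq
  simp only [map_sub, map_add, map_mul, map_pow, aeval_X, hr, zero_mul] at hval
  nlinarith [sq_nonneg (aeval r g - aeval r k), sq_nonneg (aeval r g), sq_nonneg (aeval r k)]

theorem not_isPrincipal_primeAboveSeven (h : IsOmegaThetaPair σ w t) :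
    ¬ (primeAboveSeven w t).IsPrincipal := by
  rintro ⟨a, ha⟩
  rw [Ideal.submodule_span_eq] at ha
  have hmul := primeAboveSeven_mul_conj h.sq_add_self_add_one h.aeval_thetaPoly_eq_zero
  rw [← h.map_primeAboveSeven, ha, Ideal.map_span, Set.image_singleton,
    Ideal.span_singleton_mul_span_singleton, Ideal.span_singleton_eq_span_singleton] at hmul
  exact h.not_associated_theta_mul_map a hmul.symm

end IsOmegaThetaPair

lemma isPrimitiveRoot_om : IsPrimitiveRoot om 3 := by
  simpa only [om, Nat.cast_ofNat] using Complex.isPrimitiveRoot_exp 3 (by norm_num)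

lemma om_sq_add_om_add_one : om ^ 2 + om + 1 = 0 := by
  have h := isPrimitiveRoot_om.geom_sum_eq_zero (by norm_num)
  rw [Finset.sum_range_succ, Finset.sum_range_succ, Finset.sum_range_one] at h
  linear_combination h

lemma conj_om : starRingEnd ℂ om = -1 - om := by
  have hinv : starRingEnd ℂ om * om = 1 := by
    rw [mul_comm, Complex.mul_conj', isPrimitiveRoot_om.norm'_eq_one (by norm_num)]
    norm_num
  linear_combination (-1 - om) * hinv + starRingEnd ℂ om * om_sq_add_om_add_one

lemma conj_t28 : starRingEnd ℂ t28 = t28 := by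
  rw [t28, map_mul, map_ofNat, Complex.conj_ofReal]

lemma aeval_t28_thetaPoly : aeval t28 thetaPoly = 0 := by
  have hC : (Chebyshev.C ℂ 7).eval t28 = 0 := by
    rw [t28, Complex.ofReal_cos, Chebyshev.C_two_mul_complex_cos]
    have : ((7 : ℤ) : ℂ) * (Real.pi / 14 : ℝ) = Real.pi / 2 := by push_cast; ring
    rw [this, Complex.cos_pi_div_two, mul_zero]
  have hne : t28 ≠ 0 := by
    have hcos : 0 < Real.cos (Real.pi / 14) :=
      Real.cos_pos_of_mem_Ioo ⟨by linarith [Real.pi_pos], by linarith [Real.pi_pos]⟩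
    exact mul_ne_zero two_ne_zero (Complex.ofReal_ne_zero.2 hcos.ne')
  rw [chebyshev_C_seven, eval_mul, eval_X, eval_map] at hC
  exact (mul_eq_zero.1 hC).resolve_left hne

namespace OL28

/-- `ω` as an element of `O_L`. -/
def omega : OL28 := ⟨om, Subring.subset_closure (by simp)⟩

/-- `θ` as an element of `O_L`. -/
def theta : OL28 := ⟨t28, Subring.subset_closure (by simp)⟩

lemma conj_mem {x : ℂ} (hx : x ∈ OL28) : starRingEnd ℂ x ∈ OL28 := by
  have hle : OL28 ≤ OL28.comap (starRingEnd ℂ) := by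
    refine Subring.closure_le.2 ?_
    rintro x (rfl | rfl)
    · rw [SetLike.mem_coe, Subring.mem_comap, conj_om]
      exact sub_mem (neg_mem (one_mem _)) omega.2
    · rw [SetLike.mem_coe, Subring.mem_comap, conj_t28]
      exact theta.2
  exact hle hx

/-- Complex conjugation on `O_L`. -/
def conj : OL28 →+* OL28 := (starRingEnd ℂ).restrict OL28 OL28 fun _ ↦ conj_mem

lemma closure_omega_theta : Subring.closure {omega, theta} = ⊤ := by
  have hmap : (Subring.closure {omega, theta}).map OL28.subtype = OL28 := by
    rw [RingHom.map_closure, Set.image_pair]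
    rfl
  refine eq_top_iff.2 fun x _ ↦ ?_
  obtain ⟨y, hy, hyx⟩ := hmap.ge x.2
  rwa [← Subtype.ext hyx]

lemma isOmegaThetaPair : IsOmegaThetaPair conj omega theta where
  sq_add_self_add_one := Subtype.ext om_sq_add_om_add_one
  aeval_thetaPoly_eq_zero := by
    have h := aeval_t28_thetaPoly
    rw [aeval_thetaPoly] at h ⊢
    exact Subtype.ext h
  map_omega := Subtype.ext conj_om
  map_theta := Subtype.ext conj_t28
  closure_eq_top := closure_omega_theta

end OL28

/-- In `O_L = ℤ[ω][ζ₂₈ + ζ₂₈⁻¹]` there are exactly two distinct prime ideals lying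
above the rational prime `7`; each has residue degree `1` (absolute norm `7`) and
ramification index `6`, so that `7·O_L = I⁶·J⁶`, and neither is principal. -/
theorem stmt19 :
    ∃ P Q : Ideal ↥OL28, P.IsPrime ∧ Q.IsPrime ∧ P ≠ Q ∧
      (7 : ↥OL28) ∈ P ∧ (7 : ↥OL28) ∈ Q ∧
      (∀ R : Ideal ↥OL28, R.IsPrime → (7 : ↥OL28) ∈ R → R = P ∨ R = Q) ∧
      Nat.card (↥OL28 ⧸ P) = 7 ∧ Nat.card (↥OL28 ⧸ Q) = 7 ∧
      Ideal.span {(7 : ↥OL28)} = P ^ 6 * Q ^ 6 ∧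
      ¬ P.IsPrincipal ∧ ¬ Q.IsPrincipal := by
  have h := OL28.isOmegaThetaPair
  have hω := h.sq_add_self_add_one
  have hθ := h.aeval_thetaPoly_eq_zero
  exact ⟨primeAboveSeven OL28.omega OL28.theta, primeAboveSeven (-1 - OL28.omega) OL28.theta,
    h.isMaximal_primeAboveSeven.isPrime, h.conj.isMaximal_primeAboveSeven.isPrime,
    primeAboveSeven_ne_conj hω h.primeAboveSeven_ne_top,
    seven_mem_primeAboveSeven hθ, seven_mem_primeAboveSeven hθ,
    fun _ ↦ h.eq_or_eq_conj_of_isPrime,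
    h.card_quotient_primeAboveSeven, h.conj.card_quotient_primeAboveSeven,
    span_seven_eq_pow_mul_pow hω hθ,
    h.not_isPrincipal_primeAboveSeven, h.conj.not_isPrincipal_primeAboveSeven⟩
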